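/- arXiv:1502.03574 — 2 statements merged into one kernel-verified Lean document; each statement's English description precedes it below -/
import Mathlib

section
/- Let h : ℝ → [0,∞) be integrable and suppose there is a constant C > 0 such that ∫_{-∞}^{-z} h(y) dy + ∫_{z}^{∞} h(y) dy ≤ C/z for every z > 0. Set κ = min( ∫₀^{∞} h(y) dy , ∫_{-∞}^{0} h(y) dy ) and G(x) = ∫₀ˣ h(y) dy (a signed integral, so G(x) < 0 for x < 0). Then for every x ∈ ℝ one has x·G(x) ≥ κ|x| − C. -/
/-!
For `x > 0`, the integral of `h` over `(0, x]` is the integral over the whole half-line minus the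
tail beyond `x`. A tail of size at most `C / x` costs only the constant `C` after multiplication by
`x`. The case `x < 0` is the mirror image, and since `h ≥ 0` the two-sided tail dominates both
one-sided ones.
-/

open MeasureTheory Real

section HalfLine

open Set

variable {f : ℝ → ℝ} {μ : Measure ℝ} {a x C : ℝ}

theorem integral_Ioi_mul_sub_le_mul_intervalIntegral (hf : IntegrableOn f (Ioi a) μ) (hax : a < x)
    (htail : ∫ y in Ioi x, f y ∂μ ≤ C / (x - a)) :
    (∫ y in Ioi a, f y ∂μ) * (x - a) - C ≤ (x - a) * ∫ y in a..x, f y ∂μ := by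
  have hscaled : (∫ y in Ioi x, f y ∂μ) * (x - a) ≤ C := (le_div_iff₀ (sub_pos.2 hax)).1 htail
  calc (∫ y in Ioi a, f y ∂μ) * (x - a) - C
      ≤ (∫ y in Ioi a, f y ∂μ) * (x - a) - (∫ y in Ioi x, f y ∂μ) * (x - a) := by gcongr
    _ = (x - a) * ∫ y in a..x, f y ∂μ := by
      rw [← intervalIntegral.integral_Ioi_sub_Ioi hf hax.le]
      ring

theorem integral_Iic_mul_sub_le_mul_intervalIntegral (hf : IntegrableOn f (Iic a) μ) (hxa : x < a)
    (htail : ∫ y in Iic x, f y ∂μ ≤ C / (a - x)) :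
    (∫ y in Iic a, f y ∂μ) * (a - x) - C ≤ (x - a) * ∫ y in a..x, f y ∂μ := by
  have hscaled : (∫ y in Iic x, f y ∂μ) * (a - x) ≤ C := (le_div_iff₀ (sub_pos.2 hxa)).1 htail
  calc (∫ y in Iic a, f y ∂μ) * (a - x) - C
      ≤ (∫ y in Iic a, f y ∂μ) * (a - x) - (∫ y in Iic x, f y ∂μ) * (a - x) := by gcongr
    _ = (x - a) * ∫ y in a..x, f y ∂μ := by
      rw [← intervalIntegral.integral_Iic_sub_Iic hf (hf.mono_set (Iic_subset_Iic.2 hxa.le))]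
      ring

end HalfLine

/-- Pointwise coercivity bound behind the Corollary to Proposition 3.1.
If `h ≥ 0` is integrable with tails `∫_{-∞}^{-z} h + ∫_z^∞ h ≤ C/z` for `z > 0`,
`κ = min(∫₀^∞ h, ∫_{-∞}^0 h)` and `G x = ∫₀ˣ h` (signed), then
`x · G(x) ≥ κ|x| − C` for every `x`. -/
theorem stmt_2 (h : ℝ → ℝ) (hpos : ∀ y, 0 ≤ h y) (hint : Integrable h)
    (C : ℝ) (hC : 0 < C)
    (htail : ∀ z : ℝ, 0 < z →
      (∫ y in Set.Iic (-z), h y) + (∫ y in Set.Ici z, h y) ≤ C / z)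
    (κ : ℝ) (hκ : κ = min (∫ y in Set.Ici (0:ℝ), h y) (∫ y in Set.Iic (0:ℝ), h y))
    (G : ℝ → ℝ) (hG : ∀ x, G x = ∫ y in (0:ℝ)..x, h y) :
    ∀ x : ℝ, κ * |x| - C ≤ x * G x := by
  intro x
  have hnonneg (s : Set ℝ) : 0 ≤ ∫ y in s, h y := integral_nonneg hpos
  simp only [integral_Ici_eq_integral_Ioi] at htail hκ
  rw [hG]
  rcases lt_trichotomy x 0 with hx | rfl | hx
  · have hleft : ∫ y in Set.Iic x, h y ≤ C / (0 - x) := by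
      simpa using (le_add_of_nonneg_right (hnonneg _)).trans (htail (-x) (neg_pos.2 hx))
    calc κ * |x| - C ≤ (∫ y in Set.Iic 0, h y) * |x| - C := by gcongr; exact hκ ▸ min_le_right _ _
      _ ≤ x * ∫ y in 0..x, h y := by
        simpa [abs_of_neg hx] using
          integral_Iic_mul_sub_le_mul_intervalIntegral hint.integrableOn hx hleft
  · simpa using hC.le
  · have hright : ∫ y in Set.Ioi x, h y ≤ C / (x - 0) := by
      simpa using (le_add_of_nonneg_left (hnonneg _)).trans (htail x hx)
    calc κ * |x| - C ≤ (∫ y in Set.Ioi 0, h y) * |x| - C := by gcongr; exact hκ ▸ min_le_left _ _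
      _ ≤ x * ∫ y in 0..x, h y := by
        simpa [abs_of_pos hx] using
          integral_Ioi_mul_sub_le_mul_intervalIntegral hint.integrableOn hx hright
end

section
/- Let h : ℝ → [0,∞) be integrable, C > 0 with ∫_{-∞}^{-z} h(y) dy + ∫_{z}^{∞} h(y) dy ≤ C/z for every z > 0, and suppose κ = min( ∫₀^{∞} h(y) dy , ∫_{-∞}^{0} h(y) dy ) > 0. Set G(x) = ∫₀ˣ h(y) dy. Then for every ε > 0 and every 2π-periodic C¹ function f : ℝ → ℝ one has ∫₀^{2π} |f'(x)| dx ≤ (ε/κ)·( ∫₀^{2π} (f'(x)/ε) G(f'(x)/ε) dx + 2πC ). -/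
open MeasureTheory Real

/-!
Everything comes from the pointwise bound `κ |v| ≤ v G(v) + C`. For `v ≥ 0`, the mass of `h` on
the right half-line splits as `G(v)` plus the tail beyond `v`; multiplying by `v` makes the mass
at least `κ v` and the tail at most `C`. For `v ≤ 0` the left half-line plays the same
role. Putting `v = f'(x) / ε` and integrating gives the estimate.
-/

section

variable {h : ℝ → ℝ} {C κ : ℝ}

lemma mul_integral_tails_le (hpos : ∀ y, 0 ≤ h y)
    (htail : ∀ z : ℝ, 0 < z →
      (∫ y in Set.Iic (-z), h y) + (∫ y in Set.Ici z, h y) ≤ C / z)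
    {z : ℝ} (hz : 0 ≤ z) :
    z * ((∫ y in Set.Iic (-z), h y) + ∫ y in Set.Ici z, h y) ≤ C := by
  rcases hz.eq_or_lt with rfl | hz
  · calc 0 * _ = (0 : ℝ) := zero_mul _
      _ ≤ (∫ y in Set.Iic (-1), h y) + ∫ y in Set.Ici 1, h y :=
        add_nonneg (integral_nonneg hpos) (integral_nonneg hpos)
      _ ≤ C := by simpa only [div_one] using htail 1 one_pos
  · exact (le_div_iff₀' hz).mp (htail z hz)

lemma mul_abs_le_mul_primitive_add (hint : Integrable h)
    (hright : κ ≤ ∫ y in Set.Ici (0 : ℝ), h y) (hleft : κ ≤ ∫ y in Set.Iic (0 : ℝ), h y)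
    (htail_right : ∀ z, 0 ≤ z → z * (∫ y in Set.Ici z, h y) ≤ C)
    (htail_left : ∀ z, 0 ≤ z → z * (∫ y in Set.Iic (-z), h y) ≤ C) (v : ℝ) :
    κ * |v| ≤ v * (∫ y in (0 : ℝ)..v, h y) + C := by
  rcases le_total 0 v with hv | hv
  · have mass_split :
        (∫ y in (0 : ℝ)..v, h y) + ∫ y in Set.Ici v, h y = ∫ y in Set.Ici 0, h y := by
      simpa only [integral_Ici_eq_integral_Ioi] using
        intervalIntegral.integral_interval_add_Ioi hint.integrableOn hint.integrableOn
    calc κ * |v| = v * κ := by rw [abs_of_nonneg hv, mul_comm]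
      _ ≤ v * ∫ y in Set.Ici 0, h y := by gcongr
      _ = v * (∫ y in (0 : ℝ)..v, h y) + v * ∫ y in Set.Ici v, h y := by rw [← mass_split, mul_add]
      _ ≤ v * (∫ y in (0 : ℝ)..v, h y) + C := by gcongr; exact htail_right v hv
  · have mass_split :
        (∫ y in Set.Iic 0, h y) = (∫ y in Set.Iic v, h y) - ∫ y in (0 : ℝ)..v, h y := by
      rw [← intervalIntegral.integral_Iic_sub_Iic hint.integrableOn hint.integrableOn,
        sub_sub_cancel]
    have hv' : 0 ≤ -v := neg_nonneg.mpr hv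
    calc κ * |v| = -v * κ := by rw [abs_of_nonpos hv, mul_comm]
      _ ≤ -v * ∫ y in Set.Iic 0, h y := by gcongr
      _ = v * (∫ y in (0 : ℝ)..v, h y) + -v * ∫ y in Set.Iic v, h y := by rw [mass_split]; ring
      _ ≤ v * (∫ y in (0 : ℝ)..v, h y) + C := by
        gcongr
        simpa only [neg_neg] using htail_left (-v) hv'

variable {X : Type*} [MeasurableSpace X] {μ : Measure X} {u : X → ℝ}

lemma integrable_mul_primitive_comp (hint : Integrable h) (hu : Integrable u μ) (a : ℝ) :
    Integrable (fun x => u x * ∫ y in a..u x, h y) μ := by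
  have primitive_continuous : Continuous fun v => ∫ y in a..v, h y :=
    intervalIntegral.continuous_primitive (fun _ _ => hint.intervalIntegrable) a
  have primitive_bounded (v : ℝ) : ‖∫ y in a..v, h y‖ ≤ ∫ y, ‖h y‖ :=
    intervalIntegral.norm_integral_le_integral_norm_uIoc.trans
      (setIntegral_le_integral hint.norm (.of_forall fun _ => norm_nonneg _))
  exact hu.mul_bdd (primitive_continuous.comp_aestronglyMeasurable hu.aestronglyMeasurable)
    (.of_forall fun x => primitive_bounded (u x))

lemma mul_integral_abs_le_integral_mul_primitive_add [IsFiniteMeasure μ] (hint : Integrable h)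
    (hright : κ ≤ ∫ y in Set.Ici (0 : ℝ), h y) (hleft : κ ≤ ∫ y in Set.Iic (0 : ℝ), h y)
    (htail_right : ∀ z, 0 ≤ z → z * (∫ y in Set.Ici z, h y) ≤ C)
    (htail_left : ∀ z, 0 ≤ z → z * (∫ y in Set.Iic (-z), h y) ≤ C) (hu : Integrable u μ) :
    κ * ∫ x, |u x| ∂μ ≤ (∫ x, u x * (∫ y in (0 : ℝ)..u x, h y) ∂μ) + μ.real Set.univ * C := by
  have hprod := integrable_mul_primitive_comp hint hu 0
  calc κ * ∫ x, |u x| ∂μ = ∫ x, κ * |u x| ∂μ := (integral_const_mul _ _).symm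
    _ ≤ ∫ x, (u x * (∫ y in (0 : ℝ)..u x, h y) + C) ∂μ :=
      integral_mono (hu.abs.const_mul κ) (hprod.add (integrable_const C)) fun x =>
        mul_abs_le_mul_primitive_add hint hright hleft htail_right htail_left (u x)
    _ = _ := by rw [integral_add hprod (integrable_const C), integral_const, smul_eq_mul]

end

theorem stmt_3_general {X : Type*} [MeasurableSpace X] {μ : Measure X} [IsFiniteMeasure μ]
    {h : ℝ → ℝ} (hpos : ∀ y, 0 ≤ h y) (hint : Integrable h) {C : ℝ}
    (htail : ∀ z : ℝ, 0 < z →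
      (∫ y in Set.Iic (-z), h y) + (∫ y in Set.Ici z, h y) ≤ C / z)
    {κ : ℝ} (hκ : κ = min (∫ y in Set.Ici (0 : ℝ), h y) (∫ y in Set.Iic (0 : ℝ), h y))
    (hκpos : 0 < κ) {G : ℝ → ℝ} (hG : ∀ x, G x = ∫ y in (0 : ℝ)..x, h y)
    {ε : ℝ} (hε : 0 < ε) {g : X → ℝ} (hg : Integrable g μ) :
    ∫ x, |g x| ∂μ ≤ (ε / κ) * ((∫ x, (g x / ε) * G (g x / ε) ∂μ) + μ.real Set.univ * C) := by
  have htail_right (z : ℝ) (hz : 0 ≤ z) : z * (∫ y in Set.Ici z, h y) ≤ C :=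
    (mul_le_mul_of_nonneg_left (le_add_of_nonneg_left (integral_nonneg hpos)) hz).trans
      (mul_integral_tails_le hpos htail hz)
  have htail_left (z : ℝ) (hz : 0 ≤ z) : z * (∫ y in Set.Iic (-z), h y) ≤ C :=
    (mul_le_mul_of_nonneg_left (le_add_of_nonneg_right (integral_nonneg hpos)) hz).trans
      (mul_integral_tails_le hpos htail hz)
  have scaled : κ * ∫ x, |g x / ε| ∂μ ≤
      (∫ x, (g x / ε) * G (g x / ε) ∂μ) + μ.real Set.univ * C := by
    simpa only [hG] using mul_integral_abs_le_integral_mul_primitive_add hint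
      (hκ.trans_le (min_le_left _ _)) (hκ.trans_le (min_le_right _ _))
      htail_right htail_left (hg.div_const ε)
  calc ∫ x, |g x| ∂μ = (ε / κ) * (κ * ∫ x, |g x / ε| ∂μ) := by
        simp only [abs_div, abs_of_pos hε, integral_div]
        field_simp
    _ ≤ _ := by gcongr

/-- The deterministic estimate underlying the uniform bound
`∫₀ᵗ E|ψₓ^{m,ε}|_{L¹} ds ≤ Cε/κ` of the Corollary to Proposition 3.1.
Under the tail condition on `h` and `κ > 0`, for every `ε > 0` and
`2π`-periodic C¹ function `f`:
`∫₀^{2π} |f'| dx ≤ (ε/κ)( ∫₀^{2π} (f'/ε) G(f'/ε) dx + 2πC )`. -/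
theorem stmt_3 (h : ℝ → ℝ) (hpos : ∀ y, 0 ≤ h y) (hint : Integrable h)
    (C : ℝ) (hC : 0 < C)
    (htail : ∀ z : ℝ, 0 < z →
      (∫ y in Set.Iic (-z), h y) + (∫ y in Set.Ici z, h y) ≤ C / z)
    (κ : ℝ) (hκ : κ = min (∫ y in Set.Ici (0:ℝ), h y) (∫ y in Set.Iic (0:ℝ), h y))
    (hκpos : 0 < κ)
    (G : ℝ → ℝ) (hG : ∀ x, G x = ∫ y in (0:ℝ)..x, h y)
    (ε : ℝ) (hε : 0 < ε)
    (f : ℝ → ℝ) (hf : ContDiff ℝ 1 f) (hfper : Function.Periodic f (2 * Real.pi)) :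
    (∫ x in (0:ℝ)..(2 * Real.pi), |deriv f x|)
      ≤ (ε / κ) *
        ((∫ x in (0:ℝ)..(2 * Real.pi), (deriv f x / ε) * G (deriv f x / ε))
          + 2 * Real.pi * C) := by
  simpa [intervalIntegral.integral_of_le two_pi_pos.le, two_pi_pos.le] using
    stmt_3_general hpos hint htail hκ hκpos hG hε
      ((hf.continuous_deriv le_rfl).integrableOn_Ioc (a := 0) (b := 2 * π) (μ := volume))
end
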